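/- Fix an integer d ≥ 2. Suppose L ⊆ Σ* is regular but not sparse, satisfies L = L* (L equals its own Kleene star), and satisfies condition (†). Then for every N ∈ ℕ there exist K ∈ ℕ and words d₀,…,d_N, e₀,…,e_N ∈ Σ* such that for all i, j ≤ N: there exists a word ρ ∈ Σ* of length K with [ρ] = [d_i] + [e_j] and ρ ∈ L, if and only if i ≤ j. -/

import Mathlib

/-- A language is regular if it is recognized by a DFA with finitely many states. -/
def RegularLang {α : Type} (L : Set (List α)) : Prop :=
  ∃ (Q : Type) (_ : Fintype Q) (M : DFA α Q), M.accepts = L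

/-- A language is sparse if it is regular and the number of its words of length at most `k`
is bounded by `C·(k^p + 1)`. -/
def SparseLang {α : Type} (L : Set (List α)) : Prop :=
  RegularLang L ∧ ∃ C p : ℕ, ∀ k : ℕ,
    {σ ∈ L | σ.length ≤ k}.Finite ∧ {σ ∈ L | σ.length ≤ k}.ncard ≤ C * (k ^ p + 1)

/-- Evaluation of a word over `Σ = {0,…,d−1}` base `d`, least significant digit first. -/
def evalNat {d : ℕ} : List (Fin d) → ℕ
  | [] => 0
  | k :: σ => (k : ℕ) + d * evalNat σ

/-- The Kleene star of a language: all finite concatenations of its words. -/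
def KStarLang {α : Type} (L : Set (List α)) : Set (List α) :=
  {σ | ∃ ws : List (List α), (∀ w ∈ ws, w ∈ L) ∧ σ = ws.flatten}

/-- Condition (†): there are `r` and `s ≥ 1` such that the set of words of `L` of length in
`r + sℕ` is infinite and has a forbidden suffix. -/
def CondDagger {d : ℕ} (L : Set (List (Fin d))) : Prop :=
  ∃ r s : ℕ, 1 ≤ s ∧
    {σ ∈ L | ∃ k : ℕ, σ.length = r + s * k}.Infinite ∧
    ∃ τ : List (Fin d), ∀ ρ ∈ L, (∃ k : ℕ, ρ.length = r + s * k) → ¬ τ <:+ ρ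

theorem evalNat_append {d : ℕ} (a b : List (Fin d)) :
    evalNat (a ++ b) = evalNat a + d ^ a.length * evalNat b := by
  induction a with
  | nil => simp [evalNat]
  | cons k a ih => simp only [List.cons_append, evalNat, ih, List.length_cons]; ring

theorem evalNat_flatten_replicate {d : ℕ} (w : List (Fin d)) (k : ℕ) :
    evalNat (List.replicate k w).flatten
      = evalNat w * ∑ i ∈ Finset.range k, (d ^ w.length) ^ i := by
  induction k with
  | zero => simp [evalNat]
  | succ k ih =>
    rw [List.replicate_succ, List.flatten_cons, evalNat_append, ih, Finset.sum_range_succ',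
      Finset.mul_sum, mul_add, Finset.mul_sum, Finset.mul_sum, add_comm]
    congr 1
    · exact Finset.sum_congr rfl fun i _ => by ring
    · simp

theorem evalNat_injective_of_length_eq {d : ℕ} {a b : List (Fin d)}
    (hlen : a.length = b.length) (h : evalNat a = evalNat b) : a = b := by
  induction a generalizing b with
  | nil => exact (List.length_eq_zero_iff.mp hlen.symm).symm
  | cons k a ih =>
    cases b with
    | nil => simp at hlen
    | cons l b =>
      simp only [evalNat] at h
      have hkl : (k : ℕ) = l := by
        have := congrArg (· % d) h
        simpa [Nat.add_mul_mod_self_left, Nat.mod_eq_of_lt k.isLt, Nat.mod_eq_of_lt l.isLt]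
          using this
      have hd : 0 < d := k.pos
      have hab : evalNat a = evalNat b := by
        rw [hkl] at h
        exact Nat.eq_of_mul_eq_mul_left hd (Nat.add_left_cancel h)
      rw [Fin.ext hkl, ih (by simpa using hlen) hab]

theorem evalNat_surjective {d : ℕ} (hd : 2 ≤ d) :
    Function.Surjective (evalNat : List (Fin d) → ℕ) := by
  intro n
  induction n using Nat.strong_induction_on with
  | _ n ih =>
    rcases Nat.eq_zero_or_pos n with rfl | hn
    · exact ⟨[], rfl⟩
    · obtain ⟨σ, hσ⟩ := ih (n / d) (Nat.div_lt_self hn hd)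
      refine ⟨⟨n % d, Nat.mod_lt _ (by omega)⟩ :: σ, ?_⟩
      simp only [evalNat, hσ]
      exact Nat.mod_add_div n d

theorem KStarLang.append_mem {α : Type} {L : Set (List α)} (hL : L = KStarLang L)
    {a b : List α} (ha : a ∈ L) (hb : b ∈ L) : a ++ b ∈ L := by
  rw [hL]
  exact ⟨[a, b], by simp [ha, hb], by simp⟩

/-- A regular language that is not sparse has two distinct words of the same length. -/
theorem exists_ne_length_eq_of_not_sparse {α : Type} {L : Set (List α)}
    (hreg : RegularLang L) (hns : ¬ SparseLang L) :
    ∃ u ∈ L, ∃ v ∈ L, u ≠ v ∧ u.length = v.length := by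
  by_contra! h
  refine hns ⟨hreg, 1, 1, fun k => ?_⟩
  have hmaps : Set.MapsTo List.length {σ ∈ L | σ.length ≤ k} (Finset.range (k + 1)) := by
    intro σ hσ
    simpa [Nat.lt_succ_iff] using hσ.2
  have hinj : Set.InjOn List.length {σ ∈ L | σ.length ≤ k} := by
    intro σ hσ τ hτ hlen
    by_contra hne
    exact h σ hσ.1 τ hτ.1 hne hlen
  refine ⟨Set.Finite.of_injOn hmaps hinj (Finset.finite_toSet _), ?_⟩
  have := Set.ncard_le_ncard_of_injOn List.length hmaps hinj (Finset.finite_toSet _)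
  rw [Set.ncard_coe_finset, Finset.card_range] at this
  simpa using this

theorem length_pos_of_ne_of_length_eq {α : Type} {u v : List α} (huv : u ≠ v)
    (hlen : u.length = v.length) : 0 < u.length := by
  by_contra h
  have h0 : u.length = 0 := by omega
  exact huv ((List.length_eq_zero_iff.mp h0).trans
    (List.length_eq_zero_iff.mp (hlen ▸ h0)).symm)

/-- A state on some accepting run admits two distinct words of equal length which
can be prepended to any word accepted from that state. -/
theorem exists_two_loops {d : ℕ} {Q : Type} {L : Set (List (Fin d))} {M : DFA (Fin d) Q}
    (hM : ∀ x, x ∈ L ↔ M.evalFrom M.start x ∈ M.accept)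
    (happ : ∀ a ∈ L, ∀ b ∈ L, a ++ b ∈ L) {u v : List (Fin d)} (hu : u ∈ L) (hv : v ∈ L)
    (huv : u ≠ v) (hlen : u.length = v.length) {x z : List (Fin d)} (hxz : x ++ z ∈ L) :
    ∃ c : ℕ, 0 < c ∧ ∃ w₀ w₁ : List (Fin d), w₀.length = c ∧ w₁.length = c ∧
      evalNat w₀ < evalNat w₁ ∧ ∀ w ∈ [w₀, w₁], ∀ t,
        M.evalFrom (M.evalFrom M.start x) t ∈ M.accept →
        M.evalFrom (M.evalFrom M.start x) (w ++ t) ∈ M.accept := by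
  have hloop : ∀ s ∈ L, ∀ t, M.evalFrom (M.evalFrom M.start x) t ∈ M.accept →
      M.evalFrom (M.evalFrom M.start x) ((z ++ s ++ x) ++ t) ∈ M.accept := by
    intro s hs t ht
    rw [← DFA.evalFrom_of_append, ← hM] at ht ⊢
    have := happ _ (happ _ hxz _ hs) _ ht
    simpa using this
  have hne : evalNat (z ++ u ++ x) ≠ evalNat (z ++ v ++ x) := by
    intro h
    have := evalNat_injective_of_length_eq (by simp [hlen]) h
    simp only [List.append_cancel_right_eq, List.append_cancel_left_eq] at this
    exact huv this
  have hpos : 0 < (z ++ u ++ x).length := by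
    have := length_pos_of_ne_of_length_eq huv hlen
    simp only [List.length_append]; omega
  have hlen' : (z ++ v ++ x).length = (z ++ u ++ x).length := by simp [hlen]
  rcases lt_or_gt_of_ne hne with h | h
  · refine ⟨_, hpos, _, _, rfl, hlen', h, ?_⟩
    simpa using ⟨by simpa using hloop u hu, by simpa using hloop v hv⟩
  · refine ⟨_, hpos, _, _, hlen', rfl, h, ?_⟩
    simpa using ⟨by simpa using hloop v hv, by simpa using hloop u hu⟩

/-- Half-graphs from a strictly increasing sequence whose differences, subtracted from the largest
word of length `K`, stay in the language. -/
theorem exists_half_graph {d : ℕ} (hd : 2 ≤ d) {L : Set (List (Fin d))} {N K : ℕ} {W : List (Fin d)}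
    (hmax : ∀ ρ ∈ L, ρ.length = K → evalNat ρ ≤ evalNat W) {G : Fin (N + 1) → ℤ}
    (hG : StrictMono G)
    (hmem : ∀ i j, i ≤ j → ∃ ρ ∈ L, ρ.length = K ∧ (evalNat ρ : ℤ) = evalNat W - (G j - G i)) :
    ∃ D E : Fin (N + 1) → List (Fin d), ∀ i j : Fin (N + 1),
      (∃ ρ : List (Fin d), ρ.length = K ∧ evalNat ρ = evalNat (D i) + evalNat (E j) ∧ ρ ∈ L)
        ↔ i ≤ j := by
  choose D hD using fun i => evalNat_surjective hd (G i - G 0).toNat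
  choose E hE using fun j => evalNat_surjective hd (evalNat W - (G j - G 0)).toNat
  have hsum : ∀ i j,
      ((evalNat (D i) + evalNat (E j) : ℕ) : ℤ) = evalNat W - (G j - G i) := by
    intro i j
    have h0 : G 0 ≤ G i := hG.monotone (Fin.zero_le i)
    obtain ⟨ρ, -, -, hρ⟩ := hmem 0 j (Fin.zero_le j)
    rw [hD, hE]
    omega
  refine ⟨D, E, fun i j => ⟨?_, fun hij => ?_⟩⟩
  · rintro ⟨ρ, hlen, hval, hρ⟩
    by_contra! hji
    have := hmax ρ hρ hlen
    have := hG hji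
    have := hsum i j
    omega
  · obtain ⟨ρ, hρ, hlen, hval⟩ := hmem i j hij
    refine ⟨ρ, hlen, ?_, hρ⟩
    have := hsum i j
    omega

theorem stmt11 (d : ℕ) (hd : 2 ≤ d) (L : Set (List (Fin d)))
    (hreg : RegularLang L) (hns : ¬ SparseLang L)
    (hstar : L = KStarLang L) (hdag : CondDagger L) :
    ∀ N : ℕ, ∃ (K : ℕ) (D E : Fin (N + 1) → List (Fin d)),
      ∀ i j : Fin (N + 1),
        (∃ ρ : List (Fin d), ρ.length = K ∧ evalNat ρ = evalNat (D i) + evalNat (E j) ∧ ρ ∈ L)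
          ↔ i ≤ j := by
  intro N
  have happ : ∀ a ∈ L, ∀ b ∈ L, a ++ b ∈ L := fun a ha b hb => KStarLang.append_mem hstar ha hb
  obtain ⟨u, hu, v, hv, huv, hlen⟩ := exists_ne_length_eq_of_not_sparse hreg hns
  obtain ⟨Q, _, M, hML⟩ := hreg
  have hM : ∀ x, x ∈ L ↔ M.evalFrom M.start x ∈ M.accept := by
    intro x
    rw [← hML]
    exact DFA.mem_accepts M
  have hc : ∀ q : Q, ∃ c : ℕ, 0 < c ∧ ∀ x z, M.evalFrom M.start x = q → x ++ z ∈ L →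
      ∃ w₀ w₁ : List (Fin d), w₀.length = c ∧ w₁.length = c ∧
        evalNat w₀ < evalNat w₁ ∧ ∀ w ∈ [w₀, w₁], ∀ t,
          M.evalFrom q t ∈ M.accept → M.evalFrom q (w ++ t) ∈ M.accept := by
    intro q
    by_cases h : ∃ x z, M.evalFrom M.start x = q ∧ x ++ z ∈ L
    · obtain ⟨x, z, rfl, hxz⟩ := h
      obtain ⟨c, hc, h⟩ := exists_two_loops hM happ hu hv huv hlen hxz
      exact ⟨c, hc, fun _ _ _ _ => h⟩
    · exact ⟨1, one_pos, fun x z hx hxz => (h ⟨x, z, hx, hxz⟩).elim⟩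
  choose c hcpos hloops using hc
  classical
  -- a length that is large and attained in `L`
  obtain ⟨K, hK, ρ₀, hρ₀, hρ₀K⟩ : ∃ K, Fintype.card (Σ q, Fin (c q)) * N < K ∧
      ∃ ρ ∈ L, ρ.length = K := by
    set m := Fintype.card (Σ q, Fin (c q)) * N + 1 with hm
    refine ⟨_, ?_, (List.replicate m u).flatten, ?_, rfl⟩
    · have := length_pos_of_ne_of_length_eq huv hlen
      simp only [List.length_flatten, List.map_replicate, List.sum_replicate, smul_eq_mul]
      nlinarith
    · rw [hstar]
      exact ⟨List.replicate m u, fun w hw => (List.eq_of_mem_replicate hw) ▸ hu, rfl⟩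
  obtain ⟨W, ⟨hWL, hWK⟩, hmax⟩ := Set.exists_max_image {ρ ∈ L | ρ.length = K} evalNat
    ((List.finite_length_eq (Fin d) K).subset fun ρ h => h.2) ⟨ρ₀, hρ₀, hρ₀K⟩
  obtain ⟨⟨q, r⟩, -, hfib⟩ := Finset.exists_lt_card_fiber_of_mul_lt_card_of_maps_to
    (s := Finset.range K) (t := (Finset.univ : Finset (Σ q, Fin (c q)))) (n := N)
    (f := fun t => ⟨M.evalFrom M.start (W.take t), ⟨t % c _, Nat.mod_lt _ (hcpos _)⟩⟩)
    (fun _ _ => Finset.mem_univ _) (by simpa using hK)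
  obtain ⟨T, hTsub, hTcard⟩ := Finset.exists_subset_card_eq hfib
  set t := T.orderEmbOfFin hTcard
  have htprop : ∀ i, t i < K ∧ M.evalFrom M.start (W.take (t i)) = q ∧ t i % c q = r := by
    intro i
    have := hTsub (T.orderEmbOfFin_mem hTcard i)
    rw [Finset.mem_filter, Finset.mem_range] at this
    obtain ⟨h1, h2⟩ := this
    rw [Sigma.mk.injEq] at h2
    obtain ⟨h2, h3⟩ := h2
    subst h2
    exact ⟨h1, rfl, congrArg Fin.val (eq_of_heq h3)⟩
  have hdrop : ∀ i, M.evalFrom q (W.drop (t i)) ∈ M.accept := by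
    intro i
    rw [← (htprop i).2.1, ← DFA.evalFrom_of_append, List.take_append_drop, ← hM]
    exact hWL
  obtain ⟨w₀, w₁, hw₀, hw₁, hlt, hloop⟩ := hloops q (W.take (t 0)) (W.drop (t 0)) (htprop 0).2.1
    (by rwa [List.take_append_drop])
  set m : Fin (N + 1) → ℕ := fun i => t i / c q
  have htm : ∀ i, t i = r + c q * m i := by
    intro i
    rw [← (htprop i).2.2]
    exact (Nat.mod_add_div _ _).symm
  have hmlt : ∀ i j, i < j → m i < m j := by
    intro i j hij
    have h1 : t i < t j := t.strictMono hij
    rw [htm i, htm j] at h1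
    exact Nat.lt_of_mul_lt_mul_left (Nat.lt_of_add_lt_add_left h1)
  set S : ℕ → ℕ := fun k => ∑ i ∈ Finset.range k, (d ^ c q) ^ i with hS
  -- replacing the letters of `W` between two marked positions by a power of a loop
  have hreplace : ∀ w ∈ [w₀, w₁], w.length = c q → ∀ i j, i ≤ j → ∃ ρ ∈ L, ρ.length = K ∧
      evalNat ρ + evalNat (W.take (t j)) =
        evalNat W + evalNat (W.take (t i)) + d ^ t i * (evalNat w * S (m j - m i)) := by
    intro w hw hwlen i j hij
    have hmij : m i ≤ m j := by
      rcases hij.eq_or_lt with rfl | h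
      · exact le_rfl
      · exact (hmlt i j h).le
    have hpow : ∀ k, M.evalFrom q ((List.replicate k w).flatten ++ W.drop (t j)) ∈ M.accept := by
      intro k
      induction k with
      | zero => simpa using hdrop j
      | succ k ih =>
        rw [List.replicate_succ, List.flatten_cons, List.append_assoc]
        exact hloop w hw _ ih
    have hlenpow : t i + ((List.replicate (m j - m i) w).flatten).length = t j := by
      simp only [List.length_flatten, List.map_replicate, List.sum_replicate, smul_eq_mul, hwlen]
      obtain ⟨e, he⟩ := Nat.exists_eq_add_of_le hmij
      rw [htm i, htm j, he, Nat.add_sub_cancel_left]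
      ring
    have htake : ∀ i, (W.take (t i)).length = t i := fun i => by
      rw [List.length_take, hWK]
      exact min_eq_left (htprop i).1.le
    refine ⟨W.take (t i) ++ ((List.replicate (m j - m i) w).flatten ++ W.drop (t j)), ?_, ?_, ?_⟩
    · rw [hM, DFA.evalFrom_of_append, (htprop i).2.1]
      exact hpow _
    · rw [List.length_append, List.length_append, htake, ← add_assoc, hlenpow, List.length_drop,
        hWK]
      have := (htprop j).1
      omega
    · have hW : evalNat W = evalNat (W.take (t j)) + d ^ t j * evalNat (W.drop (t j)) := by
        conv_lhs => rw [← List.take_append_drop (t j) W, evalNat_append, htake]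
      rw [evalNat_append, evalNat_append, htake, evalNat_flatten_replicate, hwlen, hW, mul_add,
        ← mul_assoc (d ^ t i) (d ^ _) _, ← pow_add, hlenpow]
      ring
  have hSpos : ∀ k, 0 < k → 0 < S k := fun k hk =>
    Finset.sum_pos (fun _ _ => by positivity) ⟨0, Finset.mem_range.mpr hk⟩
  set G : Fin (N + 1) → ℤ :=
    fun i => evalNat (W.take (t i)) - d ^ (r : ℕ) * (evalNat w₀ * S (m i)) with hGdef
  have hGval : ∀ i j, i ≤ j → (G j - G i : ℤ) = evalNat (W.take (t j)) - evalNat (W.take (t i)) -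
      d ^ t i * (evalNat w₀ * S (m j - m i)) := by
    intro i j hij
    have hmij : m i ≤ m j := Nat.div_le_div_right (t.monotone hij)
    obtain ⟨e, he⟩ := Nat.exists_eq_add_of_le hmij
    have hSadd : S (m i + e) = S (m i) + (d ^ c q) ^ m i * S e := by
      simp only [hS, Finset.sum_range_add, Finset.mul_sum, pow_add]
    simp only [hGdef]
    rw [he, Nat.add_sub_cancel_left, hSadd, htm i]
    push_cast
    ring
  refine ⟨K, exists_half_graph hd (W := W) (fun ρ hρ hρK => hmax ρ ⟨hρ, hρK⟩) (G := G) ?_ ?_⟩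
  · intro i j hij
    obtain ⟨ρ, hρ, hρK, hval⟩ := hreplace w₁ (by simp) hw₁ i j hij.le
    have h1 := hmax ρ ⟨hρ, hρK⟩
    have h2 := hGval i j hij.le
    have h3 : d ^ t i * (evalNat w₀ * S (m j - m i)) < d ^ t i * (evalNat w₁ * S (m j - m i)) := by
      have hSij := hSpos (m j - m i) (Nat.sub_pos_of_lt (hmlt i j hij))
      exact Nat.mul_lt_mul_of_pos_left (Nat.mul_lt_mul_of_pos_right hlt hSij) (by positivity)
    zify at h1 h3 hval
    linarith
  · intro i j hij
    obtain ⟨ρ, hρ, hρK, hval⟩ := hreplace w₀ (by simp) hw₀ i j hij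
    refine ⟨ρ, hρ, hρK, ?_⟩
    have h2 := hGval i j hij
    zify at hval
    linarith
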